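/- Let E ⊆ ℝⁿ be an open set and let p(·) ∈ P(E) satisfy the local log-Hölder condition |p(x) − p(y)| ≤ C/(−log(|x−y|)) for all x, y ∈ E with |x−y| ≤ 1/2, and the decay condition |p(x) − p(y)| ≤ C/log(|x| + e) for all x, y ∈ E with |y| ≥ |x|, for some constant C > 0. Then the Hardy–Littlewood maximal operator M, defined by Mf(x) = sup over balls B containing x of |B|^{−1} ∫_{B ∩ E} |f(y)| dy, is bounded on L^{p(·)}(E): there exists a constant C' > 0 such that ‖Mf‖_{L^{p(·)}(E)} ≤ C' ‖f‖_{L^{p(·)}(E)} for all f ∈ L^{p(·)}(E). -/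

import Mathlib

/-!
The maximal operator is bounded on `L^{p(·)}(E)` because of a pointwise inequality which reduces
the variable exponent to a constant one. By homogeneity and the definition of the Luxemburg norm it
suffices to bound the modular `∫_E (MG)^{p(·)}` uniformly over `G ≥ 0` supported in `E` with
`∫_E G^{p(·)} ≤ 1` (`modular_bound`). Put `q = ess inf p > 1`, `s = p / q ≥ 1` and
`w(x) = (1 + |x|)^{-(n+1)}`. The pointwise inequality (`maxFn_rpow_le`) is

  `(MG(x))^{s(x)} ≤ K (M(G^{s(·)})(x) + Mw(x) + w(x))`.

Raising it to the power `q` and integrating, the boundedness of `M` on `L^q` (`strong_type`) bounds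
the right-hand side by a multiple of `∫ G^{p(·)} + ∫ w^q`, which is finite.

For the pointwise inequality, `G` is split at height `1`.

* The part above `1` has integral at most `1`, so its average over a ball `B` is at most `|B|⁻¹`.
  The local log-Hölder condition gives a lower bound `t` for `s` on `B` with `|B|^{-(s(x) - t)}`
  bounded (`exists_local_exponent`); hence `s(x)` may be lowered to `t`, Jensen's inequality
  applies, and `G^t ≤ G^{s(y)}` where `G ≥ 1`.
* For the part below `1`, Jensen's inequality is applied with exponent `s(x)`. The decay condition
  permits replacing `s(x)` by `s(y)` at points where `G(y)` is not smaller than `w` at the one of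
  `x`, `y` of smaller norm; elsewhere `G(y)^{s(x)}` is at most `w(x) + w(y)` (`rpow_exchange`).

The constant-exponent bound is proved from Vitali's covering lemma (`weak_type`) and Marcinkiewicz
interpolation. All of this is done for an `ℝ≥0∞`-valued maximal function, which dominates the
real-valued `maxOp` (`ofReal_maxOp_le`).
-/


open MeasureTheory Metric Set Filter ENNReal

noncomputable section

abbrev Vn (n : ℕ) := EuclideanSpace ℝ (Fin n)

/-- The Luxemburg norm `‖f‖_{L^{p(·)}(E)}` with variable exponent `p` on the set `E`. -/
def luxNorm {n : ℕ} (E : Set (Vn n)) (p f : Vn n → ℝ) : ℝ :=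
  sInf {η : ℝ | 0 < η ∧ ∫⁻ x in E, ENNReal.ofReal ((|f x| / η) ^ (p x)) ∂volume ≤ 1}

/-- Membership in the variable Lebesgue space `L^{p(·)}(E)`. -/
def MemLux {n : ℕ} (E : Set (Vn n)) (p f : Vn n → ℝ) : Prop :=
  Measurable f ∧ ∃ η : ℝ, 0 < η ∧
    ∫⁻ x in E, ENNReal.ofReal ((|f x| / η) ^ (p x)) ∂volume ≤ 1

/-- The class `𝒫(E)`: measurable exponents with values in `[1,∞)`,
`ess inf p > 1` and `ess sup p < ∞`. -/
def IsPExp {n : ℕ} (E : Set (Vn n)) (p : Vn n → ℝ) : Prop :=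
  Measurable p ∧ (∀ x ∈ E, 1 ≤ p x) ∧
    1 < essInf p (volume.restrict E) ∧
    IsBoundedUnder (· ≤ ·) (ae (volume.restrict E)) p

/-- The pointwise conjugate exponent `p'(x) = p(x)/(p(x)-1)`. -/
def conjExp {n : ℕ} (p : Vn n → ℝ) : Vn n → ℝ := fun x => p x / (p x - 1)

/-- The Hardy–Littlewood maximal operator relative to the set `E`. -/
def maxOp {n : ℕ} (E : Set (Vn n)) (f : Vn n → ℝ) (x : Vn n) : ℝ :=
  ⨆ B : {B : Set (Vn n) // (∃ c r, 0 < r ∧ B = Metric.ball c r) ∧ x ∈ B},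
    (volume B.1).toReal⁻¹ * ∫ y in B.1 ∩ E, |f y|

/-- The class `ℬ(ℝⁿ)`: exponents in `𝒫(ℝⁿ)` for which `M` is bounded on `L^{p(·)}(ℝⁿ)`. -/
def IsBExp {n : ℕ} (p : Vn n → ℝ) : Prop :=
  IsPExp Set.univ p ∧ ∃ C : ℝ, 0 < C ∧ ∀ f : Vn n → ℝ, MemLux Set.univ p f →
    luxNorm Set.univ p (maxOp Set.univ f) ≤ C * luxNorm Set.univ p f

/-- The characteristic function of a set. -/
def chiS {n : ℕ} (S : Set (Vn n)) : Vn n → ℝ := S.indicator fun _ => 1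

/-- The property of `δ₂` from Lemma 2.3 (for the conjugate exponent `q'`):
`‖χ_S‖_{q'} / ‖χ_B‖_{q'} ≤ C (|S|/|B|)^{δ₂}` for all balls `B` and measurable `S ⊆ B`. -/
def Delta2Prop {n : ℕ} (q : Vn n → ℝ) (δ₂ : ℝ) : Prop :=
  ∃ C : ℝ, 0 < C ∧ ∀ (c : Vn n) (r : ℝ), 0 < r → ∀ S ⊆ Metric.ball c r, MeasurableSet S →
    luxNorm Set.univ (conjExp q) (chiS S) ≤
      C * ((volume S).toReal / (volume (Metric.ball c r)).toReal) ^ δ₂ *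
        luxNorm Set.univ (conjExp q) (chiS (Metric.ball c r))

/-- `B_k = {x : |x| ≤ 2^k}`. -/
def Bk (n : ℕ) (k : ℤ) : Set (Vn n) := Metric.closedBall 0 ((2 : ℝ) ^ k)

/-- `A_k = B_k \ B_{k-1}`. -/
def Ak (n : ℕ) (k : ℤ) : Set (Vn n) := Bk n k \ Bk n (k - 1)

/-- The homogeneous Herz norm `‖f‖_{K̇^{α,p}_{q(·)}}`, valued in `ℝ≥0∞`. -/
def herzNorm {n : ℕ} (α p : ℝ) (q f : Vn n → ℝ) : ℝ≥0∞ :=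
  (∑' k : ℤ, (ENNReal.ofReal ((2 : ℝ) ^ ((k : ℝ) * α)) *
      ENNReal.ofReal (luxNorm Set.univ q fun x => f x * chiS (Ak n k) x)) ^ p) ^ (1 / p)

/-- The homogeneous weak Herz norm `‖f‖_{WK̇^{α,p}_{q(·)}}`, valued in `ℝ≥0∞`. -/
def weakHerzNorm {n : ℕ} (α p : ℝ) (q f : Vn n → ℝ) : ℝ≥0∞ :=
  ⨆ lam : {l : ℝ // 0 < l},
    ENNReal.ofReal lam.1 *
      (∑' k : ℤ, (ENNReal.ofReal ((2 : ℝ) ^ ((k : ℝ) * α)) *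
          ENNReal.ofReal (luxNorm Set.univ q (chiS {x ∈ Ak n k | lam.1 < |f x|}))) ^ p) ^ (1 / p)

/-- The weak variable Lebesgue norm `‖f‖_{WL^{q(·)}}`. -/
def weakLuxNorm {n : ℕ} (q f : Vn n → ℝ) : ℝ :=
  ⨆ lam : {l : ℝ // 0 < l}, lam.1 * luxNorm Set.univ q (chiS {x | lam.1 < |f x|})

/-- `χ̃_k` : for `k ≥ 1` the indicator of `A_k`, for `k = 0` the indicator of `B_0`. -/
def chiTilde (n : ℕ) (k : ℕ) : Vn n → ℝ :=
  if k = 0 then chiS (Bk n 0) else chiS (Ak n (k : ℤ))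

/-- The non-homogeneous Herz norm `‖f‖_{K^{α,p}_{q(·)}}`. -/
def herzNormNH {n : ℕ} (α p : ℝ) (q f : Vn n → ℝ) : ℝ≥0∞ :=
  (∑' k : ℕ, (ENNReal.ofReal ((2 : ℝ) ^ ((k : ℝ) * α)) *
      ENNReal.ofReal (luxNorm Set.univ q fun x => f x * chiTilde n k x)) ^ p) ^ (1 / p)

/-- The non-homogeneous weak Herz norm `‖f‖_{WK^{α,p}_{q(·)}}`. -/
def weakHerzNormNH {n : ℕ} (α p : ℝ) (q f : Vn n → ℝ) : ℝ≥0∞ :=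
  ⨆ lam : {l : ℝ // 0 < l},
    ENNReal.ofReal lam.1 *
      ((ENNReal.ofReal (luxNorm Set.univ q (chiS {x ∈ Bk n 0 | lam.1 < |f x|}))) ^ p +
        ∑' k : {k : ℕ // 1 ≤ k}, (ENNReal.ofReal ((2 : ℝ) ^ ((k.1 : ℝ) * α)) *
          ENNReal.ofReal (luxNorm Set.univ q (chiS {x ∈ Ak n (k.1 : ℤ) | lam.1 < |f x|}))) ^ p) ^
        (1 / p)

/-- A dyadic central `(α, q(·))`-atom supported in `B_k`, with moments up to order `s`
vanishing. -/
def IsCentralAtom {n : ℕ} (q : Vn n → ℝ) (α : ℝ) (s : ℕ) (k : ℤ) (a : Vn n → ℝ) : Prop :=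
  Measurable a ∧ (∀ x, x ∉ Bk n k → a x = 0) ∧
    luxNorm Set.univ q a ≤ (volume (Bk n k)).toReal ^ (-(α / (n : ℝ))) ∧
    ∀ β : Fin n → ℕ, (∑ i, β i) ≤ s → ∫ x, a x * ∏ i, x i ^ β i = 0

/-- Partial derivative in the `i`-th coordinate direction. -/
def pDeriv {n : ℕ} (i : Fin n) (f : Vn n → ℝ) : Vn n → ℝ :=
  fun x => fderiv ℝ f x (EuclideanSpace.single i (1 : ℝ))

/-- Iterated partial derivative `D^β` for a multi-index `β`. -/
def mDeriv {n : ℕ} (β : Fin n → ℕ) (f : Vn n → ℝ) : Vn n → ℝ :=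
  (List.finRange n).foldr (fun i g => (pDeriv i)^[β i] g) f

/-- The class `𝒜_N` of Schwartz functions `φ` with
`sup_{|a|,|b| ≤ N} |x^a D^b φ(x)| ≤ 1`. -/
def InClassA {n : ℕ} (N : ℕ) (φ : Vn n → ℝ) : Prop :=
  (∃ ψ : SchwartzMap (Vn n) ℝ, ⇑ψ = φ) ∧
    ∀ a b : Fin n → ℕ, (∑ i, a i) ≤ N → (∑ i, b i) ≤ N →
      ∀ x : Vn n, |(∏ i, x i ^ a i) * mDeriv b φ x| ≤ 1

/-- The grand maximal function `G_N(g)(x) = sup_{φ ∈ 𝒜_N} sup_{|y-x|<t} |(g ∗ φ_t)(y)|`. -/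
def grandMax {n : ℕ} (N : ℕ) (g : Vn n → ℝ) (x : Vn n) : ℝ :=
  ⨆ φ : {φ : Vn n → ℝ // InClassA N φ},
    ⨆ yt : {yt : Vn n × ℝ // 0 < yt.2 ∧ dist x yt.1 < yt.2},
      |∫ z, g z * ((yt.1.2 ^ n)⁻¹ * φ.1 ((yt.1.2)⁻¹ • (yt.1.1 - z)))|

/-! ### The Hardy–Littlewood maximal function with values in `ℝ≥0∞` -/

/-- The uncentred maximal function of `g : ℝⁿ → [0,∞]`: the supremum of the averages of `g` over
all open balls containing the point. -/
def maxFn {n : ℕ} (g : Vn n → ℝ≥0∞) (x : Vn n) : ℝ≥0∞ :=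
  ⨆ (c : Vn n) (r : ℝ) (_ : 0 < r) (_ : x ∈ ball c r), ⨍⁻ y in ball c r, g y ∂volume

lemma le_maxFn {n : ℕ} (g : Vn n → ℝ≥0∞) {x c : Vn n} {r : ℝ} (hr : 0 < r) (hx : x ∈ ball c r) :
    ⨍⁻ y in ball c r, g y ∂volume ≤ maxFn g x :=
  le_iSup₂_of_le c r <| le_iSup₂_of_le hr hx le_rfl

lemma lt_maxFn_iff {n : ℕ} (g : Vn n → ℝ≥0∞) (x : Vn n) (l : ℝ≥0∞) :
    l < maxFn g x ↔ ∃ c r, 0 < r ∧ x ∈ ball c r ∧ l < ⨍⁻ y in ball c r, g y ∂volume := by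
  simp only [maxFn, lt_iSup_iff, exists_prop]

lemma isOpen_lt_maxFn {n : ℕ} (g : Vn n → ℝ≥0∞) (l : ℝ≥0∞) : IsOpen {x | l < maxFn g x} := by
  rw [isOpen_iff_mem_nhds]
  intro x hx
  obtain ⟨c, r, hr, hxc, hl⟩ := (lt_maxFn_iff g x l).1 hx
  filter_upwards [isOpen_ball.mem_nhds hxc] with y hy
  exact hl.trans_le (le_maxFn g hr hy)

lemma measurable_maxFn {n : ℕ} (g : Vn n → ℝ≥0∞) : Measurable (maxFn g) :=
  measurable_of_Ioi fun l => (isOpen_lt_maxFn g l).measurableSet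

lemma maxFn_le_add {n : ℕ} {g h : Vn n → ℝ≥0∞} {l : ℝ≥0∞} (hgh : ∀ x, g x ≤ l + h x)
    (x : Vn n) : maxFn g x ≤ l + maxFn h x := by
  refine iSup₂_le fun c r => iSup₂_le fun hr hx => ?_
  have h0 : volume (ball c r) ≠ 0 := (measure_ball_pos volume c hr).ne'
  have h1 : volume (ball c r) ≠ ∞ := measure_ball_lt_top.ne
  calc ⨍⁻ y in ball c r, g y ∂volume ≤ ⨍⁻ y in ball c r, (l + h y) ∂volume := by
        rw [setLAverage_eq, setLAverage_eq]; gcongr; exact hgh _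
    _ = l + ⨍⁻ y in ball c r, h y ∂volume := by
        rw [setLAverage_eq', lintegral_add_left measurable_const, ← setLAverage_eq',
          ← setLAverage_eq', setLAverage_const h0 h1]
    _ ≤ _ := by gcongr; exact le_maxFn h hr hx

lemma volume_closedBall_five {n : ℕ} (c : Vn n) {r : ℝ} (hr : 0 < r) :
    volume (closedBall c (5 * r)) = 5 ^ n * volume (ball c r) := by
  rw [Measure.addHaar_closedBall _ _ (by positivity), Measure.addHaar_ball_of_pos _ _ hr,
    finrank_euclideanSpace_fin, mul_pow, ENNReal.ofReal_mul (by positivity), mul_assoc]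
  congr 1
  rw [ENNReal.ofReal_pow (by norm_num)]; norm_num

/-- Weak type (1,1): the Vitali covering lemma applied to finitely many balls covering a compact
subset of the open superlevel set. -/
lemma weak_type {n : ℕ} (g : Vn n → ℝ≥0∞) (l : ℝ≥0∞) :
    l * volume {x | l < maxFn g x} ≤ 5 ^ n * ∫⁻ x, g x := by
  rw [(isOpen_lt_maxFn g l).measure_eq_iSup_isCompact]
  simp only [ENNReal.mul_iSup]
  refine iSup₂_le fun K hK => iSup_le fun hKc => ?_
  have hx : ∀ x : K, ∃ c r, 0 < r ∧ (x : Vn n) ∈ ball c r ∧ l < ⨍⁻ y in ball c r, g y ∂volume :=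
    fun x => (lt_maxFn_iff g x l).1 (hK x.2)
  choose c r hr hxc hl using hx
  obtain ⟨t, ht⟩ := hKc.elim_finite_subcover (fun x : K => ball (c x) (r x))
    (fun x => isOpen_ball) (fun x hx => mem_iUnion.2 ⟨⟨x, hx⟩, hxc ⟨x, hx⟩⟩)
  obtain ⟨R, hR⟩ := (t.image r).bddAbove
  obtain ⟨u, hut, hud, hu⟩ := Vitali.exists_disjoint_subfamily_covering_enlargement_closedBall
    (t : Set K) c r R (fun a ha => hR (Finset.mem_coe.2 (Finset.mem_image_of_mem r ha))) 5
    (by norm_num)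
  have hfin : u.Finite := t.finite_toSet.subset hut
  have hKu : K ⊆ ⋃ b ∈ u, closedBall (c b) (5 * r b) := by
    intro x hx
    obtain ⟨a, ha, hxa⟩ := mem_iUnion₂.1 (ht hx)
    obtain ⟨b, hb, hab⟩ := hu a ha
    exact mem_iUnion₂.2 ⟨b, hb, hab (ball_subset_closedBall hxa)⟩
  have hub : u.PairwiseDisjoint fun a => ball (c a) (r a) :=
    hud.mono fun a => ball_subset_closedBall
  calc l * volume K ≤ l * ∑' b : u, volume (closedBall (c b) (5 * r b)) := by
        gcongr
        exact (measure_mono hKu).trans (measure_biUnion_le _ hfin.countable _)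
    _ = ∑' b : u, 5 ^ n * (l * volume (ball (c b) (r b))) := by
        rw [← ENNReal.tsum_mul_left]
        congr 1; ext b; rw [volume_closedBall_five _ (hr b)]; ring
    _ ≤ ∑' b : u, 5 ^ n * ∫⁻ y in ball (c b) (r b), g y := by
        gcongr with b
        have h0 : volume (ball (c b) (r b)) ≠ 0 := (measure_ball_pos volume _ (hr b)).ne'
        have h1 : volume (ball (c b) (r b)) ≠ ∞ := measure_ball_lt_top.ne
        have := (hl b).le
        rw [setLAverage_eq] at this
        rwa [ENNReal.le_div_iff_mul_le (Or.inl h0) (Or.inl h1)] at this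
    _ = 5 ^ n * ∫⁻ y in ⋃ b ∈ u, ball (c b) (r b), g y := by
        rw [ENNReal.tsum_mul_left, lintegral_biUnion hfin.countable
          (fun _ _ => measurableSet_ball) hub]
    _ ≤ _ := by gcongr; exact Measure.restrict_le_self

/-- The weak-type bound sharpened by discarding the part of `g` below `l`. -/
lemma weak_type_trunc {n : ℕ} (g : Vn n → ℝ≥0∞) (l : ℝ≥0∞) :
    l * volume {x | 2 * l < maxFn g x} ≤ 5 ^ n * ∫⁻ x, {x | l < g x}.indicator g x := by
  refine le_trans ?_ (weak_type _ l)
  gcongr l * volume ?_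
  intro x hx
  have h1 := maxFn_le_add (g := g) (h := {x | l < g x}.indicator g) (l := l) (fun y => by
    by_cases hy : l < g y
    · simp [hy]
    · simpa [hy] using not_lt.1 hy) x
  by_contra h2
  simp only [mem_ofPred_eq, not_lt] at h2 hx
  have h3 : maxFn g x ≤ 2 * l := h1.trans (by rw [two_mul]; gcongr)
  exact absurd (hx.trans_le h3) (lt_irrefl _)

/-- The inner integral of the Marcinkiewicz interpolation argument. -/
lemma lintegral_rpow_Ioo {q a : ℝ} (hq : 1 < q) (ha : 0 ≤ a) :
    ∫⁻ t in Ioo 0 a, ENNReal.ofReal (t ^ (q - 2)) = ENNReal.ofReal (a ^ (q - 1) / (q - 1)) := by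
  have hi : IntervalIntegrable (fun t : ℝ => t ^ (q - 2)) volume 0 a :=
    intervalIntegral.intervalIntegrable_rpow' (by linarith)
  rw [Measure.restrict_congr_set Ioo_ae_eq_Ioc, ← ofReal_integral_eq_lintegral_ofReal,
    ← intervalIntegral.integral_of_le ha, integral_rpow (Or.inl (by linarith))]
  · congr 1
    rw [show q - 2 + 1 = q - 1 by ring, Real.zero_rpow (by linarith), sub_zero]
  · exact (intervalIntegrable_iff_integrableOn_Ioc_of_le ha).1 hi
  · filter_upwards [ae_restrict_mem measurableSet_Ioc] with t ht
    exact Real.rpow_nonneg ht.1.le _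

lemma ae_maxFn_lt_top {n : ℕ} {q : ℝ} (hq : 1 < q) {g : Vn n → ℝ≥0∞}
    (hfin : ∫⁻ x, g x ^ q ≠ ∞) : ∀ᵐ x, maxFn g x < ∞ := by
  have key : ∀ N : ℕ, 1 ≤ N →
      (N : ℝ≥0∞) * volume {x | ¬ maxFn g x < ∞} ≤ 5 ^ n * ∫⁻ x, g x ^ q := by
    intro N hN
    calc (N : ℝ≥0∞) * volume {x | ¬ maxFn g x < ∞}
        ≤ N * volume {x | 2 * (N : ℝ≥0∞) < maxFn g x} := by
          gcongr
          intro hx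
          rw [not_lt, top_le_iff] at hx
          rw [hx]
          exact ENNReal.mul_lt_top (by simp) (by simp)
      _ ≤ _ := weak_type_trunc g N
      _ ≤ _ := by
          gcongr with x
          by_cases hx : (N : ℝ≥0∞) < g x
          · have h1 : 1 ≤ g x := le_trans (by exact_mod_cast hN) hx.le
            simp only [mem_ofPred_eq, hx, indicator_of_mem]
            exact ENNReal.le_rpow_self_of_one_le h1 hq.le
          · simp [hx]
  rw [ae_iff]
  by_contra h0
  have hb : (5 : ℝ≥0∞) ^ n * ∫⁻ x, g x ^ q ≠ ∞ := ENNReal.mul_ne_top (by finiteness) hfin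
  obtain ⟨N, hN⟩ := ENNReal.exists_nat_mul_gt h0 hb
  have hN1 : 1 ≤ N := by
    rcases Nat.eq_zero_or_pos N with rfl | h
    · simp at hN
    · exact h
  exact absurd (key N hN1) (not_le.2 hN)

/-- Strong type `(q,q)` for `q > 1`: Marcinkiewicz interpolation between the weak-type bound and
the trivial bound on `L^∞`, by the layer cake formula and Tonelli. -/
lemma strong_type (n : ℕ) {q : ℝ} (hq : 1 < q) : ∃ A : ℝ≥0∞, A ≠ ∞ ∧ ∀ g : Vn n → ℝ≥0∞,
    Measurable g → ∫⁻ x, maxFn g x ^ q ≤ A * ∫⁻ x, g x ^ q := by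
  set D : ℝ≥0∞ := ENNReal.ofReal q * (2 * 5 ^ n) * ENNReal.ofReal (2 ^ (q - 1) / (q - 1)) with hD
  refine ⟨D + 1, by simp only [hD]; finiteness, fun g hg => ?_⟩
  by_cases hfin : ∫⁻ x, g x ^ q = ∞
  · rw [hfin, ENNReal.mul_top (by simp)]; exact le_top
  have hM := ae_maxFn_lt_top hq hfin
  have hgfin : ∀ᵐ x, g x < ∞ := by
    filter_upwards [ae_lt_top (hg.pow_const q) hfin] with x hx
    by_contra h
    rw [not_lt, top_le_iff] at h
    simp [h, ENNReal.top_rpow_of_pos (by linarith : 0 < q)] at hx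
  have h1 : ∫⁻ x, maxFn g x ^ q = ∫⁻ x, ENNReal.ofReal ((maxFn g x).toReal ^ q) := by
    refine lintegral_congr_ae ?_
    filter_upwards [hM] with x hx
    rw [← ENNReal.ofReal_rpow_of_nonneg ENNReal.toReal_nonneg (by linarith),
      ENNReal.ofReal_toReal hx.ne]
  rw [h1, lintegral_rpow_eq_lintegral_meas_lt_mul _ (by filter_upwards with x; simp)
    (measurable_maxFn g).ennreal_toReal.aemeasurable (by linarith)]
  have h2 : ∀ t ∈ Ioi (0 : ℝ), volume {a | t < (maxFn g a).toReal} * ENNReal.ofReal (t ^ (q - 1)) ≤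
      2 * 5 ^ n * ∫⁻ x, {x | ENNReal.ofReal (t / 2) < g x}.indicator g x *
        ENNReal.ofReal (t ^ (q - 2)) := by
    intro t ht
    have ht : 0 < t := ht
    have hsub : volume {a | t < (maxFn g a).toReal} ≤
        volume {a | 2 * ENNReal.ofReal (t / 2) < maxFn g a} := by
      refine measure_mono fun a ha => ?_
      have ha : t < (maxFn g a).toReal := ha
      simp only [mem_ofPred_eq]
      rw [show (2 : ℝ≥0∞) = ENNReal.ofReal 2 by norm_num, ← ENNReal.ofReal_mul (by norm_num),
        show 2 * (t / 2) = t by ring]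
      exact (ENNReal.ofReal_lt_iff_lt_toReal ht.le
        (fun h => by rw [h] at ha; simp at ha; linarith)).2 ha
    have hpow : ENNReal.ofReal (t ^ (q - 1)) =
        2 * (ENNReal.ofReal (t / 2) * ENNReal.ofReal (t ^ (q - 2))) := by
      rw [show (2 : ℝ≥0∞) = ENNReal.ofReal 2 by norm_num, ← ENNReal.ofReal_mul (by positivity),
        ← ENNReal.ofReal_mul (by positivity)]
      congr 1
      rw [show q - 1 = 1 + (q - 2) by ring, Real.rpow_add ht, Real.rpow_one]; ring
    have hmeas : Measurable ({x | ENNReal.ofReal (t / 2) < g x}.indicator g) :=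
      hg.indicator (measurableSet_lt measurable_const hg)
    rw [lintegral_mul_const _ hmeas, hpow]
    calc _ ≤ volume {a | 2 * ENNReal.ofReal (t / 2) < maxFn g a} *
          (2 * (ENNReal.ofReal (t / 2) * ENNReal.ofReal (t ^ (q - 2)))) := by gcongr
      _ = 2 * (ENNReal.ofReal (t / 2) * volume {a | 2 * ENNReal.ofReal (t / 2) < maxFn g a}) *
          ENNReal.ofReal (t ^ (q - 2)) := by ring
      _ ≤ 2 * (5 ^ n * ∫⁻ x, {x | ENNReal.ofReal (t / 2) < g x}.indicator g x) *
          ENNReal.ofReal (t ^ (q - 2)) := by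
          exact mul_le_mul_left (mul_le_mul_right (weak_type_trunc g _) 2) _
      _ = _ := by ring
  have hjm : Measurable (Function.uncurry fun (t : ℝ) (x : Vn n) =>
      {x | ENNReal.ofReal (t / 2) < g x}.indicator g x * ENNReal.ofReal (t ^ (q - 2))) := by
    refine Measurable.mul ?_ (by fun_prop)
    have : (fun z : ℝ × Vn n => {x | ENNReal.ofReal (z.1 / 2) < g x}.indicator g z.2) =
        {z : ℝ × Vn n | ENNReal.ofReal (z.1 / 2) < g z.2}.indicator fun z => g z.2 := by
      ext z; simp [indicator]
    change Measurable (fun z : ℝ × Vn n => {x | ENNReal.ofReal (z.1 / 2) < g x}.indicator g z.2)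
    rw [this]
    exact (hg.comp measurable_snd).indicator (measurableSet_lt (by fun_prop) (by fun_prop))
  have h3 : ∀ x, g x < ∞ → ∫⁻ t in Ioi (0 : ℝ), {x | ENNReal.ofReal (t / 2) < g x}.indicator g x *
      ENNReal.ofReal (t ^ (q - 2)) = ENNReal.ofReal (2 ^ (q - 1) / (q - 1)) * g x ^ q := by
    intro x hx
    have e1 : ∀ t ∈ Ioi (0 : ℝ), {x | ENNReal.ofReal (t / 2) < g x}.indicator g x *
        ENNReal.ofReal (t ^ (q - 2)) = g x * (Iio (2 * (g x).toReal)).indicator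
          (fun t => ENNReal.ofReal (t ^ (q - 2))) t := by
      intro t ht
      have ht : 0 < t := ht
      have hiff : ENNReal.ofReal (t / 2) < g x ↔ t < 2 * (g x).toReal := by
        rw [ENNReal.ofReal_lt_iff_lt_toReal (by positivity) hx.ne]
        constructor <;> intro h <;> linarith
      by_cases h : t < 2 * (g x).toReal
      · simp [hiff, h]
      · simp [hiff, h]
    rw [setLIntegral_congr_fun measurableSet_Ioi e1, lintegral_const_mul _
      ((by fun_prop : Measurable fun t : ℝ => ENNReal.ofReal (t ^ (q - 2))).indicator
        measurableSet_Iio), lintegral_indicator measurableSet_Iio,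
      Measure.restrict_restrict measurableSet_Iio, Iio_inter_Ioi,
      lintegral_rpow_Ioo hq (by positivity)]
    have hc : (0 : ℝ) ≤ 2 ^ (q - 1) / (q - 1) := div_nonneg (by positivity) (by linarith)
    have hgx : g x = ENNReal.ofReal (g x).toReal := (ENNReal.ofReal_toReal hx.ne).symm
    set a := (g x).toReal with ha
    have ha0 : 0 ≤ a := ENNReal.toReal_nonneg
    rw [hgx, ENNReal.ofReal_rpow_of_nonneg ha0 (by linarith), ← ENNReal.ofReal_mul ha0,
      ← ENNReal.ofReal_mul hc]
    congr 1
    rw [Real.mul_rpow (by norm_num) ha0]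
    have : a ^ q = a * a ^ (q - 1) := by
      rcases ha0.eq_or_lt with h | h
      · rw [← h, Real.zero_rpow (by linarith)]; simp
      · nth_rewrite 2 [← Real.rpow_one a]; rw [← Real.rpow_add h]; ring_nf
    rw [this]; ring
  calc ENNReal.ofReal q * ∫⁻ t in Ioi (0 : ℝ),
        volume {a | t < (maxFn g a).toReal} * ENNReal.ofReal (t ^ (q - 1))
      ≤ ENNReal.ofReal q * ∫⁻ t in Ioi (0 : ℝ), 2 * 5 ^ n *
        ∫⁻ x, {x | ENNReal.ofReal (t / 2) < g x}.indicator g x * ENNReal.ofReal (t ^ (q - 2)) := by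
        refine mul_le_mul_right ?_ _
        exact setLIntegral_mono' measurableSet_Ioi h2
    _ = ENNReal.ofReal q * (2 * 5 ^ n) * ∫⁻ x, ∫⁻ t in Ioi (0 : ℝ),
        {x | ENNReal.ofReal (t / 2) < g x}.indicator g x * ENNReal.ofReal (t ^ (q - 2)) := by
        rw [lintegral_const_mul' _ _ (by finiteness), lintegral_lintegral_swap hjm.aemeasurable,
          mul_assoc _ (2 * 5 ^ n)]
    _ = ENNReal.ofReal q * (2 * 5 ^ n) *
        ∫⁻ x, ENNReal.ofReal (2 ^ (q - 1) / (q - 1)) * g x ^ q := by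
        congr 1
        refine lintegral_congr_ae ?_
        filter_upwards [hgfin] with x hx using h3 x hx
    _ = D * ∫⁻ x, g x ^ q := by
        rw [lintegral_const_mul' _ _ (by finiteness), hD]; ring
    _ ≤ _ := by gcongr; exact le_self_add

/-! ### The pointwise estimate for variable exponents -/

/-- The weight `(1 + |x|)^{-(n+1)}`: the error term produced by the decay condition. It is bounded
by `1` and integrable on `ℝⁿ`. -/
def errW {n : ℕ} (x : Vn n) : ℝ≥0∞ := ENNReal.ofReal ((1 + ‖x‖) ^ (-((n : ℝ) + 1)))

lemma measurable_errW {n : ℕ} : Measurable (errW (n := n)) := by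
  unfold errW; fun_prop

lemma errW_le_one {n : ℕ} (x : Vn n) : errW x ≤ 1 := by
  unfold errW
  rw [ENNReal.ofReal_le_one]
  exact Real.rpow_le_one_of_one_le_of_nonpos (by linarith [norm_nonneg x]) (by linarith)

lemma lintegral_errW_rpow_ne_top (n : ℕ) {q : ℝ} (hq : 1 ≤ q) :
    ∫⁻ x : Vn n, errW x ^ q ≠ ∞ := by
  refine ne_top_of_le_ne_top (finite_integral_one_add_norm (E := Vn n) (μ := volume)
    (r := (n : ℝ) + 1) (by simp)).ne ?_
  exact lintegral_mono fun x => ENNReal.rpow_le_self_of_le_one (errW_le_one x) hq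

lemma setLAverage_rpow_le {n : ℕ} {g : Vn n → ℝ≥0∞} (hg : Measurable g) (c : Vn n) {r t : ℝ}
    (hr : 0 < r) (ht : 1 ≤ t) :
    (⨍⁻ y in ball c r, g y ∂volume) ^ t ≤ ⨍⁻ y in ball c r, g y ^ t ∂volume := by
  have h0 : volume (ball c r) ≠ 0 := (measure_ball_pos volume c hr).ne'
  have h1 : volume (ball c r) ≠ ∞ := measure_ball_lt_top.ne
  rw [setLAverage_eq', setLAverage_eq']
  have hP : IsProbabilityMeasure ((volume (ball c r))⁻¹ • volume.restrict (ball c r)) :=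
    ⟨by simp [ENNReal.inv_mul_cancel h0 h1]⟩
  have := eLpNorm'_le_eLpNorm'_of_exponent_le (f := g) one_pos ht
    ((volume (ball c r))⁻¹ • volume.restrict (ball c r)) hg.aestronglyMeasurable
  simp only [eLpNorm'_eq_lintegral_enorm, enorm_eq_self, ENNReal.rpow_one, div_one, one_div] at this
  exact (ENNReal.le_rpow_inv_iff (by linarith)).1 this

/-- If `|u - v| ≤ C / log (Z + e)`, the exponent of a number `a ∈ [0,1]` may be changed from `u` to
`v` at the cost of the factor `e^{mC}`, unless `a < (1 + Z)^{-m}`, in which case `a ^ u` is itself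
below that weight. -/
lemma rpow_exchange {a u v Z C m : ℝ} (ha0 : 0 ≤ a) (ha1 : a ≤ 1) (hu : 1 ≤ u)
    (hZ : 0 ≤ Z) (hm : 0 ≤ m) (huv : |u - v| ≤ C / Real.log (Z + Real.exp 1)) :
    a ^ u ≤ Real.exp (m * C) * a ^ v + (1 + Z) ^ (-m) := by
  have hw : 0 < (1 + Z) ^ (-m) := Real.rpow_pos_of_pos (by linarith) _
  by_cases h : a < (1 + Z) ^ (-m)
  · have h1 : a ^ u ≤ a := by
      simpa using Real.rpow_le_rpow_of_exponent_ge' ha0 ha1 zero_le_one hu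
    have h2 : 0 ≤ Real.exp (m * C) * a ^ v := by positivity
    linarith
  · push Not at h
    have ha : 0 < a := hw.trans_le h
    have he : 1 < Real.exp 1 := by simp
    have hl : 0 < Real.log (Z + Real.exp 1) := Real.log_pos (by linarith)
    have hlog : -(m * Real.log (Z + Real.exp 1)) ≤ Real.log a := by
      have h3 := Real.log_le_log hw h
      rw [Real.log_rpow (by linarith)] at h3
      have h4 : Real.log (1 + Z) ≤ Real.log (Z + Real.exp 1) :=
        Real.log_le_log (by linarith) (by linarith)
      nlinarith
    have hla : Real.log a ≤ 0 := Real.log_nonpos ha0 ha1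
    rw [le_div_iff₀ hl] at huv
    have h5 : Real.log a * (u - v) ≤ m * C := by
      have h6 : Real.log a * (u - v) ≤ -Real.log a * |u - v| := by
        nlinarith [neg_abs_le (u - v)]
      have h7 : -Real.log a * |u - v| ≤ m * Real.log (Z + Real.exp 1) * |u - v| :=
        mul_le_mul_of_nonneg_right (by linarith) (abs_nonneg _)
      nlinarith
    have h8 : a ^ u = Real.exp (Real.log a * (u - v)) * a ^ v := by
      rw [Real.rpow_def_of_pos ha, Real.rpow_def_of_pos ha, ← Real.exp_add]; ring_nf
    rw [h8]
    have : Real.exp (Real.log a * (u - v)) * a ^ v ≤ Real.exp (m * C) * a ^ v := by gcongr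
    linarith

lemma rpow_small_ball {r δ C : ℝ} (n : ℕ) (hr : 0 < r) (hr4 : r ≤ 1 / 4) (hC : 0 ≤ C)
    (hδ : δ ≤ C / (-Real.log (2 * r))) :
    ((r⁻¹) ^ n) ^ δ ≤ Real.exp (n * (2 * C)) := by
  have hL : 0 < -Real.log (2 * r) := by
    have := Real.log_neg (x := 2 * r) (by linarith) (by linarith); linarith
  have hlr : -Real.log r ≤ 2 * (-Real.log (2 * r)) := by
    have h1 : Real.log (2 * r * (2 * r)) ≤ Real.log r :=
      Real.log_le_log (by positivity) (by nlinarith)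
    rw [Real.log_mul (by positivity) (by positivity)] at h1
    linarith
  rw [Real.rpow_def_of_pos (by positivity), Real.log_pow, Real.log_inv, Real.exp_le_exp, mul_assoc]
  refine mul_le_mul_of_nonneg_left ?_ (Nat.cast_nonneg n)
  rw [le_div_iff₀ hL] at hδ
  by_cases h0 : 0 ≤ δ
  · nlinarith
  · have : Real.log r < 0 := Real.log_neg hr (by linarith)
    nlinarith [mul_pos_of_neg_of_neg this (not_le.1 h0)]

/-- The consequence of the local log-Hölder condition: on each ball `B ∋ x` there is a lower
bound `t` for the exponent such that `|B|^{-(s(x) - t)}` is bounded uniformly in `B` and `x`. -/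
lemma exists_local_exponent {n : ℕ} {D : Set (Vn n)} {s : Vn n → ℝ} {S C : ℝ}
    (hs1 : ∀ x, 1 ≤ s x) (hsS : ∀ x, s x ≤ S) (hC : 0 < C)
    (hlog : ∀ x ∈ D, ∀ y ∈ D, dist x y ≤ 1 / 2 →
      |s x - s y| ≤ C / (-Real.log (dist x y))) :
    ∃ K : ℝ≥0∞, K ≠ ∞ ∧ ∀ x ∈ D, ∀ c r, 0 < r → x ∈ ball c r → ∃ t, 1 ≤ t ∧ t ≤ s x ∧
      (∀ y ∈ D, y ∈ ball c r → t ≤ s y) ∧ (volume (ball c r))⁻¹ ^ (s x - t) ≤ K := by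
  set v : ℝ := (volume (ball (0 : Vn n) 1)).toReal with hv
  have hv0 : 0 < v := ENNReal.toReal_pos (measure_ball_pos volume _ one_pos).ne'
    measure_ball_lt_top.ne
  have hvol : ∀ (c : Vn n) (r : ℝ), 0 < r → ∀ δ : ℝ, 0 ≤ δ →
      (volume (ball c r))⁻¹ ^ δ = ENNReal.ofReal ((v⁻¹ * (r⁻¹) ^ n) ^ δ) := by
    intro c r hr δ hδ
    rw [Measure.addHaar_ball_of_pos _ _ hr, finrank_euclideanSpace_fin,
      ← ENNReal.ofReal_toReal (measure_ball_lt_top (μ := volume) (x := (0 : Vn n)) (r := 1)).ne,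
      ← hv, ← ENNReal.ofReal_mul (by positivity), ← ENNReal.ofReal_inv_of_pos (by positivity),
      ENNReal.ofReal_rpow_of_nonneg (by positivity) hδ]
    congr 2
    rw [mul_inv, inv_pow, mul_comm]
  set b : ℝ := max 1 (v⁻¹ * 4 ^ n) with hb
  have hb1 : 1 ≤ b := le_max_left _ _
  refine ⟨ENNReal.ofReal (b ^ S * Real.exp (n * (2 * C))), ENNReal.ofReal_ne_top, ?_⟩
  intro x hx c r hr hxc
  have hbS : ∀ δ, 0 ≤ δ → δ ≤ S → ∀ z : ℝ, 0 ≤ z → z ≤ b → z ^ δ ≤ b ^ S := fun δ h0 hS z hz hzb =>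
    (Real.rpow_le_rpow hz hzb h0).trans (Real.rpow_le_rpow_of_exponent_le hb1 hS)
  have hx1 := hs1 x
  have hxS := hsS x
  by_cases hr4 : r ≤ 1 / 4
  · have hL : 0 < -Real.log (2 * r) := by
      have := Real.log_neg (x := 2 * r) (by linarith) (by linarith); linarith
    have hCL : 0 < C / (-Real.log (2 * r)) := by positivity
    refine ⟨max 1 (s x - C / (-Real.log (2 * r))), le_max_left _ _,
      max_le hx1 (by linarith), ?_, ?_⟩
    · intro y hy hyc
      refine max_le (hs1 y) ?_
      have hd : dist x y < 2 * r := by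
        have := dist_triangle_right x y c
        rw [mem_ball] at hxc hyc; linarith
      have h1 := hlog x hx y hy (by linarith)
      have h2 : C / (-Real.log (dist x y)) ≤ C / (-Real.log (2 * r)) := by
        -- at distance `0` the left-hand side is `C / 0 = 0`
        rcases (dist_nonneg (x := x) (y := y)).eq_or_lt with h | h
        · rw [← h]; simpa using hCL.le
        · have := Real.log_le_log h hd.le
          gcongr
      have := le_abs_self (s x - s y)
      linarith
    · set t := max 1 (s x - C / (-Real.log (2 * r))) with ht
      have ht1 : 1 ≤ t := le_max_left _ _
      have htx : t ≤ s x := max_le hx1 (by linarith)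
      have hδ : s x - t ≤ C / (-Real.log (2 * r)) := by
        have : s x - C / (-Real.log (2 * r)) ≤ t := le_max_right _ _
        linarith
      rw [hvol c r hr _ (by linarith), Real.mul_rpow (by positivity) (by positivity)]
      gcongr
      · refine hbS _ (by linarith) (by linarith) _ (by positivity) (le_trans ?_ (le_max_right _ _))
        exact le_mul_of_one_le_right (by positivity) (one_le_pow₀ (by norm_num))
      · exact rpow_small_ball n hr hr4 hC.le hδ
  · push Not at hr4
    refine ⟨1, le_rfl, hx1, fun y _ _ => hs1 y, ?_⟩
    rw [hvol c r hr _ (by linarith)]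
    gcongr
    refine (hbS _ (by linarith) (by linarith) _ (by positivity) (le_trans ?_ (le_max_right _ _))).trans
      (le_mul_of_one_le_right (by positivity) (Real.one_le_exp (by positivity)))
    gcongr
    rw [inv_le_comm₀ hr (by norm_num)]; linarith

/-- The part of `G` above `1`: a ball average is at most `|B|⁻¹`, so the exponent `s(x)` may be
lowered to the constant of `exists_local_exponent`, where Jensen's inequality applies. -/
lemma avg_rpow_le_of_large {n : ℕ} {D : Set (Vn n)} {s : Vn n → ℝ} {G : Vn n → ℝ≥0∞}
    (hG : Measurable G) (hGD : ∀ x, x ∉ D → G x = 0)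
    (hint : ∫⁻ y, {y | 1 < G y}.indicator G y ≤ 1) {u t : ℝ} {c : Vn n} {r : ℝ} {K : ℝ≥0∞}
    (hr : 0 < r) (ht1 : 1 ≤ t) (htu : t ≤ u) (hts : ∀ y ∈ D, y ∈ ball c r → t ≤ s y)
    (hK : (volume (ball c r))⁻¹ ^ (u - t) ≤ K) :
    (⨍⁻ y in ball c r, {y | 1 < G y}.indicator G y ∂volume) ^ u ≤
      K * ⨍⁻ y in ball c r, G y ^ s y ∂volume := by
  set g := {y | 1 < G y}.indicator G with hg
  have hgm : Measurable g := hG.indicator (measurableSet_lt measurable_const hG)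
  have h1 : ⨍⁻ y in ball c r, g y ∂volume ≤ (volume (ball c r))⁻¹ := by
    rw [setLAverage_eq, div_eq_mul_inv]
    calc _ ≤ 1 * (volume (ball c r))⁻¹ := by
          gcongr; exact (setLIntegral_le_lintegral _ _).trans hint
      _ = _ := one_mul _
  calc (⨍⁻ y in ball c r, g y ∂volume) ^ u
      = (⨍⁻ y in ball c r, g y ∂volume) ^ (u - t) * (⨍⁻ y in ball c r, g y ∂volume) ^ t := by
        rw [← ENNReal.rpow_add_of_nonneg _ _ (by linarith) (by linarith)]; ring_nf
    _ ≤ K * ⨍⁻ y in ball c r, g y ^ t ∂volume := by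
        refine mul_le_mul' (le_trans ?_ hK) (setLAverage_rpow_le hgm c hr ht1)
        exact ENNReal.rpow_le_rpow h1 (by linarith)
    _ ≤ _ := by
        rw [setLAverage_eq, setLAverage_eq]
        refine mul_le_mul_right (ENNReal.div_le_div_right ?_ _) _
        refine setLIntegral_mono' measurableSet_ball fun y hy => ?_
        by_cases h : 1 < G y
        · have hyD : y ∈ D := by
            by_contra hn
            simp [hGD y hn] at h
          simpa [hg, h] using ENNReal.rpow_le_rpow_of_exponent_le h.le (hts y hyD hy)
        · simp [hg, h, ENNReal.zero_rpow_of_pos (by linarith : 0 < t)]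

/-- The part of `G` below `1`: Jensen's inequality with the constant exponent `s(x)`, after which
the decay condition replaces `s(x)` by `s(y)` at the cost of the error weight. -/
lemma avg_rpow_le_of_small {n : ℕ} {D : Set (Vn n)} {s : Vn n → ℝ} {C : ℝ} {G : Vn n → ℝ≥0∞}
    (hs : Measurable s) (hs1 : ∀ x, 1 ≤ s x)
    (hdecay : ∀ x ∈ D, ∀ y ∈ D, ‖x‖ ≤ ‖y‖ →
      |s x - s y| ≤ C / Real.log (‖x‖ + Real.exp 1))
    (hG : Measurable G) (hGD : ∀ x, x ∉ D → G x = 0) {x c : Vn n} {r : ℝ} (hx : x ∈ D)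
    (hr : 0 < r) :
    (⨍⁻ y in ball c r, {y | 1 < G y}ᶜ.indicator G y ∂volume) ^ s x ≤
      ENNReal.ofReal (Real.exp (((n : ℝ) + 1) * C)) * ⨍⁻ y in ball c r, G y ^ s y ∂volume +
        errW x + ⨍⁻ y in ball c r, errW y ∂volume := by
  set K : ℝ≥0∞ := ENNReal.ofReal (Real.exp (((n : ℝ) + 1) * C)) with hK
  set g := {y | 1 < G y}ᶜ.indicator G with hg
  have hgm : Measurable g := hG.indicator (measurableSet_lt measurable_const hG).compl
  have h0 : volume (ball c r) ≠ 0 := (measure_ball_pos volume c hr).ne'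
  have h1 : volume (ball c r) ≠ ∞ := measure_ball_lt_top.ne
  have hpt : ∀ y, g y ^ s x ≤ K * G y ^ s y + errW x + errW y := by
    intro y
    have hzero : g y = 0 → g y ^ s x ≤ K * G y ^ s y + errW x + errW y := fun h => by
      rw [h, ENNReal.zero_rpow_of_pos (by linarith [hs1 x])]; exact zero_le
    by_cases hy : y ∈ D
    swap
    · exact hzero (by simp [hg, hGD y hy])
    by_cases hGy : 1 < G y
    · exact hzero (by simp [hg, hGy])
    have hgy : g y = G y := by simp only [hg]; exact indicator_of_mem hGy _
    push Not at hGy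
    have hfin : G y ≠ ∞ := ne_top_of_le_ne_top one_ne_top hGy
    obtain ⟨a, ha0, ha⟩ : ∃ a : ℝ, 0 ≤ a ∧ G y = ENNReal.ofReal a :=
      ⟨_, ENNReal.toReal_nonneg, (ENNReal.ofReal_toReal hfin).symm⟩
    have ha1 : a ≤ 1 := by rwa [ha, ENNReal.ofReal_le_one] at hGy
    have main : ∀ z : Vn n, |s x - s y| ≤ C / Real.log (‖z‖ + Real.exp 1) →
        g y ^ s x ≤ K * G y ^ s y + errW z := by
      intro z hz
      have := rpow_exchange (m := (n : ℝ) + 1) ha0 ha1 (hs1 x) (norm_nonneg z)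
        (by positivity) hz
      rw [hgy, ha, hK, errW, ENNReal.ofReal_rpow_of_nonneg ha0 (by linarith [hs1 x]),
        ENNReal.ofReal_rpow_of_nonneg ha0 (by linarith [hs1 y]), ← ENNReal.ofReal_mul (by positivity),
        ← ENNReal.ofReal_add (by positivity) (by positivity)]
      exact ENNReal.ofReal_le_ofReal this
    rcases le_total ‖x‖ ‖y‖ with h | h
    · exact (main x (hdecay x hx y hy h)).trans le_self_add
    · refine (main y (by rw [abs_sub_comm]; exact hdecay y hy x hx h)).trans ?_
      gcongr; exact le_self_add
  have hGs : Measurable fun y => G y ^ s y := hG.pow hs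
  calc _ ≤ ⨍⁻ y in ball c r, g y ^ s x ∂volume := setLAverage_rpow_le hgm c hr (hs1 x)
    _ ≤ ⨍⁻ y in ball c r, (K * G y ^ s y + errW x + errW y) ∂volume := by
        rw [setLAverage_eq, setLAverage_eq]
        gcongr with y; exact hpt y
    _ = _ := by
        rw [setLAverage_eq', lintegral_add_right _ measurable_errW,
          lintegral_add_right _ measurable_const, lintegral_const_mul _ hGs, ← setLAverage_eq',
          ← setLAverage_eq', ← setLAverage_eq', setLAverage_const h0 h1]

/-- The pointwise estimate `(MG)^{s(x)} ≲ M(G^{s(·)}) + Mw + w` with `w = errW`, for functions `G`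
whose part above `1` has integral at most `1`. -/
lemma maxFn_rpow_le {n : ℕ} {D : Set (Vn n)} {s : Vn n → ℝ} {S C : ℝ}
    (hs : Measurable s) (hs1 : ∀ x, 1 ≤ s x) (hsS : ∀ x, s x ≤ S) (hC : 0 < C)
    (hlog : ∀ x ∈ D, ∀ y ∈ D, dist x y ≤ 1 / 2 →
      |s x - s y| ≤ C / (-Real.log (dist x y)))
    (hdecay : ∀ x ∈ D, ∀ y ∈ D, ‖x‖ ≤ ‖y‖ →
      |s x - s y| ≤ C / Real.log (‖x‖ + Real.exp 1)) :
    ∃ K : ℝ≥0∞, K ≠ ∞ ∧ ∀ G : Vn n → ℝ≥0∞, Measurable G → (∀ x, x ∉ D → G x = 0) →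
      ∫⁻ y, {y | 1 < G y}.indicator G y ≤ 1 → ∀ x ∈ D,
        maxFn G x ^ s x ≤ K * (maxFn (fun y => G y ^ s y) x + maxFn errW x + errW x) := by
  obtain ⟨K₁, hK₁, hloc⟩ := exists_local_exponent hs1 hsS hC hlog
  set K₂ : ℝ≥0∞ := ENNReal.ofReal (Real.exp (((n : ℝ) + 1) * C)) with hK₂
  have hS : 1 ≤ S := (hs1 0).trans (hsS 0)
  refine ⟨2 ^ S * (K₁ + K₂ + 1), by finiteness, fun G hG hGD hint x hx => ?_⟩
  rw [← ENNReal.le_rpow_inv_iff (by linarith [hs1 x])]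
  refine iSup₂_le fun c r => iSup₂_le fun hr hxc => ?_
  rw [ENNReal.le_rpow_inv_iff (by linarith [hs1 x])]
  obtain ⟨t, ht1, htx, hts, htK⟩ := hloc x hx c r hr hxc
  have hL := avg_rpow_le_of_large hG hGD hint hr ht1 htx hts htK
  have hSm := avg_rpow_le_of_small (c := c) (r := r) hs hs1 hdecay hG hGD hx hr
  have hsplit : ⨍⁻ y in ball c r, G y ∂volume = ⨍⁻ y in ball c r, {y | 1 < G y}.indicator G y ∂volume +
      ⨍⁻ y in ball c r, {y | 1 < G y}ᶜ.indicator G y ∂volume := by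
    rw [setLAverage_eq', setLAverage_eq', setLAverage_eq', ← lintegral_add_left
      (hG.indicator (measurableSet_lt measurable_const hG))]
    congr 1; ext y
    exact congrFun (indicator_self_add_compl {y | 1 < G y} G).symm y
  rw [hsplit]
  set A := ⨍⁻ y in ball c r, G y ^ s y ∂volume with hA
  have hA' : A ≤ maxFn (fun y => G y ^ s y) x := le_maxFn _ hr hxc
  have hW' : ⨍⁻ y in ball c r, errW y ∂volume ≤ maxFn errW x := le_maxFn _ hr hxc
  set M₁ := maxFn (fun y => G y ^ s y) x
  set M₂ := maxFn errW x
  calc _ ≤ 2 ^ (s x - 1) * (_ + _) := ENNReal.rpow_add_le_mul_rpow_add_rpow _ _ (hs1 x)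
    _ ≤ 2 ^ S * (K₁ * M₁ + (K₂ * M₁ + errW x + M₂)) := by
        gcongr
        · exact one_le_two
        · linarith [hsS x]
        · exact hL.trans (by gcongr)
        · exact hSm.trans (by gcongr)
    _ ≤ 2 ^ S * ((K₁ + K₂ + 1) * (M₁ + M₂ + errW x)) := by
        gcongr
        calc K₁ * M₁ + (K₂ * M₁ + errW x + M₂)
            ≤ K₁ * M₁ + (K₂ * M₁ + errW x + M₂) + (M₁ + (K₁ + K₂) * (M₂ + errW x)) := le_self_add
          _ = _ := by ring
    _ = _ := by ring

/-! ### Modular bound and the theorem -/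

/-- The modular bound: `∫_D (MG)^{p(·)}` is bounded uniformly over all `G` supported in `D` with
modular at most `1`. The pointwise estimate is applied with exponent `p / q`, `q > 1`, so that
the strong type `(q,q)` bound controls its right-hand side. -/
lemma modular_bound {n : ℕ} {D : Set (Vn n)} (hD : MeasurableSet D) {p : Vn n → ℝ}
    (hpm : Measurable p) {q P : ℝ} (hq : 1 < q) (hpq : ∀ x ∈ D, q ≤ p x) (hpP : ∀ x ∈ D, p x ≤ P)
    {C : ℝ} (hC : 0 < C)
    (hlog : ∀ x ∈ D, ∀ y ∈ D, dist x y ≤ 1 / 2 →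
      |p x - p y| ≤ C / (-Real.log (dist x y)))
    (hdecay : ∀ x ∈ D, ∀ y ∈ D, ‖x‖ ≤ ‖y‖ →
      |p x - p y| ≤ C / Real.log (‖x‖ + Real.exp 1)) :
    ∃ T : ℝ≥0∞, T ≠ ∞ ∧ ∀ G : Vn n → ℝ≥0∞, Measurable G → (∀ x, x ∉ D → G x = 0) →
      ∫⁻ x in D, G x ^ p x ≤ 1 → ∫⁻ x in D, maxFn G x ^ p x ≤ T := by
  classical
  have hq0 : 0 < q := by linarith
  set s : Vn n → ℝ := D.piecewise (fun x => p x / q) (fun _ => 1) with hs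
  have hsD : ∀ x ∈ D, s x = p x / q := fun x hx => piecewise_eq_of_mem _ _ _ hx
  have hsD' : ∀ x, x ∉ D → s x = 1 := fun x hx => piecewise_eq_of_notMem _ _ _ hx
  have hsm : Measurable s := (hpm.div_const q).piecewise hD measurable_const
  have hs1 : ∀ x, 1 ≤ s x := fun x => by
    by_cases hx : x ∈ D
    · rw [hsD x hx, one_le_div hq0]; exact hpq x hx
    · rw [hsD' x hx]
  have hsS : ∀ x, s x ≤ max 1 (P / q) := fun x => by
    by_cases hx : x ∈ D
    · rw [hsD x hx]; exact le_max_of_le_right (by have := hpP x hx; gcongr)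
    · rw [hsD' x hx]; exact le_max_left _ _
  have hsp : ∀ x ∈ D, ∀ y ∈ D, |s x - s y| ≤ |p x - p y| := fun x hx y hy => by
    rw [hsD x hx, hsD y hy, ← sub_div, abs_div, abs_of_pos hq0]
    exact div_le_self (abs_nonneg _) hq.le
  obtain ⟨K, hK, hkey⟩ := maxFn_rpow_le hsm hs1 hsS hC
    (fun x hx y hy h => (hsp x hx y hy).trans (hlog x hx y hy h))
    (fun x hx y hy h => (hsp x hx y hy).trans (hdecay x hx y hy h))
  obtain ⟨A, hA, hstrong⟩ := strong_type n hq
  have hW := lintegral_errW_rpow_ne_top n hq.le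
  set W := ∫⁻ x : Vn n, errW x ^ q with hWdef
  refine ⟨K ^ q * (2 ^ (q - 1) * (2 ^ (q - 1) * (A + A * W) + W)), ?_, fun G hG hGD hint => ?_⟩
  · have : 0 ≤ q - 1 := by linarith
    finiteness
  have hlarge : ∫⁻ y, {y | 1 < G y}.indicator G y ≤ 1 := by
    refine le_trans ?_ hint
    rw [← lintegral_indicator hD]
    refine lintegral_mono fun y => ?_
    by_cases h : 1 < G y
    · have hyD : y ∈ D := by
        by_contra hn
        simp [hGD y hn] at h
      have hp1 : 1 ≤ p y := hq.le.trans (hpq y hyD)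
      simpa [h, hyD] using ENNReal.le_rpow_self_of_one_le h.le hp1
    · simp [h]
  set Gs : Vn n → ℝ≥0∞ := fun y => G y ^ s y with hGs
  have hGsm : Measurable Gs := hG.pow hsm
  have hGsq : ∫⁻ y, Gs y ^ q ≤ 1 := by
    refine le_trans (le_of_eq ?_) hint
    rw [← lintegral_indicator hD]
    refine lintegral_congr fun y => ?_
    by_cases hy : y ∈ D
    · simp only [hGs, hy, indicator_of_mem]
      rw [← ENNReal.rpow_mul, hsD y hy, div_mul_cancel₀ _ hq0.ne']
    · simp [hGs, hy, hGD y hy, hsD' y hy, hq0]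
  have hpt : ∀ x ∈ D, maxFn G x ^ p x ≤ K ^ q * (2 ^ (q - 1) * (2 ^ (q - 1) *
      (maxFn Gs x ^ q + maxFn errW x ^ q) + errW x ^ q)) := by
    intro x hx
    calc maxFn G x ^ p x = (maxFn G x ^ s x) ^ q := by
          rw [← ENNReal.rpow_mul, hsD x hx, div_mul_cancel₀ _ hq0.ne']
      _ ≤ (K * (maxFn Gs x + maxFn errW x + errW x)) ^ q :=
          ENNReal.rpow_le_rpow (hkey G hG hGD hlarge x hx) hq0.le
      _ = K ^ q * (maxFn Gs x + maxFn errW x + errW x) ^ q :=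
          ENNReal.mul_rpow_of_nonneg _ _ hq0.le
      _ ≤ _ := by
          refine mul_le_mul_right ((ENNReal.rpow_add_le_mul_rpow_add_rpow _ _ hq.le).trans ?_) _
          gcongr
          exact ENNReal.rpow_add_le_mul_rpow_add_rpow _ _ hq.le
  have m1 := (measurable_maxFn Gs).pow_const q
  have m2 := (measurable_maxFn (errW (n := n))).pow_const q
  have m3 := (measurable_errW (n := n)).pow_const q
  calc ∫⁻ x in D, maxFn G x ^ p x
      ≤ ∫⁻ x in D, K ^ q * (2 ^ (q - 1) * (2 ^ (q - 1) *
        (maxFn Gs x ^ q + maxFn errW x ^ q) + errW x ^ q)) := setLIntegral_mono' hD hpt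
    _ ≤ ∫⁻ x, K ^ q * (2 ^ (q - 1) * (2 ^ (q - 1) *
        (maxFn Gs x ^ q + maxFn errW x ^ q) + errW x ^ q)) := setLIntegral_le_lintegral _ _
    _ = K ^ q * (2 ^ (q - 1) * (2 ^ (q - 1) *
        ((∫⁻ x, maxFn Gs x ^ q) + ∫⁻ x : Vn n, maxFn errW x ^ q) + W)) := by
        rw [lintegral_const_mul _ (by fun_prop), lintegral_const_mul _ (by fun_prop),
          lintegral_add_right _ m3, lintegral_const_mul _ (by fun_prop), lintegral_add_right _ m2]
    _ ≤ _ := by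
        gcongr
        · calc _ ≤ A * ∫⁻ y, Gs y ^ q := hstrong Gs hGsm
            _ ≤ A * 1 := by gcongr
            _ = A := mul_one A
        · exact hstrong errW measurable_errW

/-- The real-valued operator `maxOp` is dominated by the `ℝ≥0∞`-valued maximal function. The
conventions for integrals of non-integrable functions and suprema of unbounded families only
decrease the left-hand side. -/
lemma ofReal_maxOp_le {n : ℕ} {E D : Set (Vn n)} (hD : MeasurableSet D)
    (hED : E =ᵐ[volume] D) {f : Vn n → ℝ} (hf : Measurable f) {η : ℝ} (hη : 0 < η) (x : Vn n) :
    ENNReal.ofReal (|maxOp E f x| / η) ≤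
      maxFn (D.indicator fun y => ENNReal.ofReal (|f y| / η)) x := by
  set G := D.indicator fun y => ENNReal.ofReal (|f y| / η) with hG
  by_cases htop : maxFn G x = ∞
  · rw [htop]; exact le_top
  have hnn : 0 ≤ maxOp E f x := Real.iSup_nonneg fun B =>
    mul_nonneg (by positivity) (integral_nonneg fun y => abs_nonneg _)
  rw [abs_of_nonneg hnn]
  refine ENNReal.ofReal_le_of_le_toReal ?_
  rw [div_le_iff₀ hη]
  refine Real.iSup_le ?_ (by positivity)
  rintro ⟨B, ⟨c, r, hr, rfl⟩, hx⟩
  have h1 : ∫ y in ball c r ∩ E, |f y| = (ENNReal.ofReal η * ∫⁻ y in ball c r, G y).toReal := by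
    rw [integral_eq_lintegral_of_nonneg_ae (ae_of_all _ fun y => abs_nonneg _)
      hf.abs.aestronglyMeasurable]
    congr 1
    have hres : (volume : Measure (Vn n)).restrict (ball c r ∩ E) =
        (volume.restrict (ball c r)).restrict D := by
      rw [Measure.restrict_restrict hD, inter_comm]
      exact Measure.restrict_congr_set (hED.inter (ae_eq_refl _))
    rw [hres, hG, lintegral_indicator hD, ← lintegral_const_mul _ (by fun_prop)]
    refine lintegral_congr fun y => ?_
    rw [← ENNReal.ofReal_mul hη.le, mul_div_cancel₀ _ hη.ne']
  have h2 := le_maxFn G hr hx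
  rw [setLAverage_eq] at h2
  have h3 := ENNReal.toReal_mono htop h2
  rw [ENNReal.toReal_div] at h3
  simp only [h1, ENNReal.toReal_mul, ENNReal.toReal_ofReal hη.le]
  calc _ = (∫⁻ y in ball c r, G y).toReal / (volume (ball c r)).toReal * η := by
        rw [div_eq_mul_inv]; ring
    _ ≤ _ := by gcongr

/-- Lemma 2.1: log-Hölder continuity implies boundedness of the Hardy–Littlewood
maximal operator on `L^{p(·)}(E)`. -/
theorem statement0 {n : ℕ} (E : Set (Vn n)) (hE : IsOpen E)
    (p : Vn n → ℝ) (hp : IsPExp E p) (C : ℝ) (hC : 0 < C)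
    (hlog : ∀ x ∈ E, ∀ y ∈ E, dist x y ≤ 1 / 2 →
      |p x - p y| ≤ C / (-Real.log (dist x y)))
    (hdecay : ∀ x ∈ E, ∀ y ∈ E, ‖x‖ ≤ ‖y‖ →
      |p x - p y| ≤ C / Real.log (‖x‖ + Real.exp 1)) :
    ∃ C' : ℝ, 0 < C' ∧ ∀ f : Vn n → ℝ, MemLux E p f →
      luxNorm E p (maxOp E f) ≤ C' * luxNorm E p f := by
  obtain ⟨hpm, hp1, hq, P, hP⟩ := hp
  rw [eventually_map] at hP
  have hEm := hE.measurableSet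
  set q := essInf p (volume.restrict E) with hqdef
  have hqp : ∀ᵐ x ∂volume.restrict E, q ≤ p x := ae_essInf_le
    ⟨1, by rw [eventually_map]; filter_upwards [ae_restrict_mem hEm] with x hx using hp1 x hx⟩
  -- the essential bounds on `p` hold everywhere after removing a null set from `E`
  set D : Set (Vn n) := E ∩ {x | q ≤ p x ∧ p x ≤ P} with hDdef
  have hD : MeasurableSet D := hEm.inter
    ((measurableSet_le measurable_const hpm).inter (measurableSet_le hpm measurable_const))
  have hED : E =ᵐ[volume] D := by
    rw [ae_restrict_iff' hEm] at hqp hP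
    filter_upwards [hqp, hP] with x h1 h2
    exact propext ⟨fun hx => ⟨hx, h1 hx, h2 hx⟩, fun hx => hx.1⟩
  obtain ⟨T, hT, hmod⟩ := modular_bound hD hpm hq (fun x hx => hx.2.1) (fun x hx => hx.2.2) hC
    (fun x hx y hy => hlog x hx.1 y hy.1) (fun x hx y hy => hdecay x hx.1 y hy.1)
  set C' : ℝ := 1 + T.toReal with hC'
  have hC1 : 1 ≤ C' := by rw [hC']; linarith [ENNReal.toReal_nonneg (a := T)]
  have hC0 : 0 < C' := by linarith
  have hTC : T ≤ ENNReal.ofReal C' := by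
    rw [← ENNReal.ofReal_toReal hT]
    exact ENNReal.ofReal_le_ofReal (by rw [hC']; simp)
  have hres : (volume : Measure (Vn n)).restrict E = volume.restrict D :=
    Measure.restrict_congr_set hED
  -- an admissible `η` for `f` gives the admissible value `C' * η` for `maxOp E f`
  have main : ∀ f : Vn n → ℝ, Measurable f → ∀ η : ℝ, 0 < η →
      ∫⁻ x in E, ENNReal.ofReal ((|f x| / η) ^ (p x)) ∂volume ≤ 1 →
      ∫⁻ x in E, ENNReal.ofReal ((|maxOp E f x| / (C' * η)) ^ (p x)) ∂volume ≤ 1 := by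
    intro f hf η hη hint
    set G := D.indicator fun y => ENNReal.ofReal (|f y| / η) with hG
    have hGm : Measurable G := Measurable.indicator (by fun_prop) hD
    have hp0 : ∀ x ∈ D, 1 ≤ p x := fun x hx => hp1 x hx.1
    have hGint : ∫⁻ x in D, G x ^ p x ≤ 1 := by
      rw [hres] at hint
      refine le_trans (le_of_eq (setLIntegral_congr_fun hD fun x hx => ?_)) hint
      simp only [hG, hx, indicator_of_mem]
      exact ENNReal.ofReal_rpow_of_nonneg (by positivity) (by linarith [hp0 x hx])
    have hb := hmod G hGm (fun x hx => indicator_of_notMem hx _) hGint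
    rw [hres]
    calc _ ≤ ∫⁻ x in D, (ENNReal.ofReal C')⁻¹ * maxFn G x ^ p x := by
          refine setLIntegral_mono' hD fun x hx => ?_
          have hpx := hp0 x hx
          have hp00 : 0 ≤ p x := by linarith
          have e : |maxOp E f x| / (C' * η) = C'⁻¹ * (|maxOp E f x| / η) := by
            field_simp
          rw [e, Real.mul_rpow (by positivity) (by positivity), ENNReal.ofReal_mul (by positivity),
            ← ENNReal.ofReal_inv_of_pos hC0,
            ← ENNReal.ofReal_rpow_of_nonneg (by positivity : 0 ≤ |maxOp E f x| / η) hp00]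
          refine mul_le_mul' (ENNReal.ofReal_le_ofReal ?_)
            (ENNReal.rpow_le_rpow (ofReal_maxOp_le hD hED hf hη x) hp00)
          simpa using Real.rpow_le_rpow_of_exponent_ge (inv_pos.2 hC0) (inv_le_one_of_one_le₀ hC1) hpx
      _ = (ENNReal.ofReal C')⁻¹ * ∫⁻ x in D, maxFn G x ^ p x :=
          lintegral_const_mul' _ _ (by simp [hC0])
      _ ≤ (ENNReal.ofReal C')⁻¹ * ENNReal.ofReal C' := by gcongr; exact hb.trans hTC
      _ ≤ 1 := ENNReal.inv_mul_le_one _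
  refine ⟨C', hC0, fun f ⟨hf, η₀, hη₀, hint₀⟩ => ?_⟩
  rw [← div_le_iff₀' hC0]
  refine le_csInf ⟨η₀, hη₀, hint₀⟩ fun η ⟨hη, hint⟩ => ?_
  rw [div_le_iff₀' hC0]
  exact csInf_le ⟨0, fun z hz => hz.1.le⟩ ⟨by positivity, main f hf η hη hint⟩

end
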